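/- (Metric entropy bound for the kernel mixture of polynomials class) Fix p, m ∈ ℕ₊, B > 0, and 1 < h̲ < h̄ < ∞. There exist constants c₂ > 0 and ε₀ > 0 (depending only on p, m, B, h̲, h̄) such that for every K ∈ ℕ₊ and every ε ∈ (0, ε₀), there is a finite set G of bounded functions on [0,1]^p with cardinality at most exp(c₂ K^p log(1/ε)) such that for every f ∈ F_K there exists g ∈ G with sup_{x ∈ [0,1]^p} |f(x) − g(x)| ≤ ε; equivalently, the ε-covering number of (F_K, ‖·‖_∞) satisfies log N(ε, F_K, ‖·‖_∞) ≤ c₂ K^p log(1/ε). -/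

import Mathlib

open MeasureTheory Filter Real Matrix
open scoped ENNReal NNReal BigOperators Classical

noncomputable section

namespace KMP

/-- The unit hypercube `[0,1]^p`. -/
def cube (p : ℕ) : Set (Fin p → ℝ) := {x | ∀ j, 0 ≤ x j ∧ x j ≤ 1}

/-- A boxed kernel: continuous, `[0,1]`-valued, supported on the closed unit sup-norm ball,
nonincreasing in the sup-norm (`‖·‖` on `Fin p → ℝ` is the sup-norm). -/
def IsBoxedKernel {p : ℕ} (φ : (Fin p → ℝ) → ℝ) : Prop :=
  Continuous φ ∧ (∀ u, 0 ≤ φ u ∧ φ u ≤ 1) ∧ (∀ u, 1 < ‖u‖ → φ u = 0) ∧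
    ∀ u v, ‖u‖ ≤ ‖v‖ → φ v ≤ φ u

/-- The block `X_K(k) = ∏_j ((k_j-1)/K, k_j/K]`; here `k j : Fin K` encodes `k_j - 1`. -/
def block {p : ℕ} (K : ℕ) (k : Fin p → Fin K) : Set (Fin p → ℝ) :=
  {x | ∀ j, ((k j : ℕ) : ℝ) / K < x j ∧ x j ≤ (((k j : ℕ) : ℝ) + 1) / K}

/-- The closure of the block `X_K(k)`. -/
def blockCl {p : ℕ} (K : ℕ) (k : Fin p → Fin K) : Set (Fin p → ℝ) :=
  {x | ∀ j, ((k j : ℕ) : ℝ) / K ≤ x j ∧ x j ≤ (((k j : ℕ) : ℝ) + 1) / K}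

/-- The center `μ_k^⋆` of the block `X_K(k)`. -/
def center {p : ℕ} (K : ℕ) (k : Fin p → Fin K) : Fin p → ℝ :=
  fun j => (2 * ((k j : ℕ) : ℝ) + 1) / (2 * K)

/-- Multi-indices `s ∈ {0,…,m}^p` with `|s| ≤ m`. -/
def mIdx (p m : ℕ) : Finset (Fin p → Fin (m + 1)) :=
  Finset.univ.filter fun s => (∑ j, (s j : ℕ)) ≤ m

/-- Degree `|s|` of a multi-index. -/
def deg {p m : ℕ} (s : Fin p → Fin (m + 1)) : ℕ := ∑ j, (s j : ℕ)

/-- Kernel mixture weight `w_k(x) = φ_h(x-μ_k) / ∑_l φ_h(x-μ_l)`. -/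
def weight {p : ℕ} (φ : (Fin p → ℝ) → ℝ) (K : ℕ) (h : ℝ)
    (μ : (Fin p → Fin K) → Fin p → ℝ) (k : Fin p → Fin K) (x : Fin p → ℝ) : ℝ :=
  φ (fun j => (x j - μ k j) / h) / ∑ l : Fin p → Fin K, φ (fun j => (x j - μ l j) / h)

/-- Monomial `(x - μ_k^⋆)^s`. -/
def mono {p : ℕ} (K m : ℕ) (k : Fin p → Fin K) (s : Fin p → Fin (m + 1))
    (x : Fin p → ℝ) : ℝ :=
  ∏ j, (x j - center K k j) ^ (s j : ℕ)

/-- A kernel mixture of polynomials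
`f(x) = ∑_k ∑_{|s| ≤ m} ξ_{ks} w_k(x) (x - μ_k^⋆)^s`. -/
def kmpFun {p : ℕ} (φ : (Fin p → ℝ) → ℝ) (K m : ℕ) (h : ℝ)
    (μ : (Fin p → Fin K) → Fin p → ℝ)
    (ξ : (Fin p → Fin K) → (Fin p → Fin (m + 1)) → ℝ) (x : Fin p → ℝ) : ℝ :=
  ∑ k : Fin p → Fin K, ∑ s ∈ mIdx p m, ξ k s * weight φ K h μ k x * mono K m k s x

/-- Partial derivative in the `j`-th coordinate direction. -/
def pderiv1 {p : ℕ} (j : Fin p) (f : (Fin p → ℝ) → ℝ) : (Fin p → ℝ) → ℝ :=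
  fun x => fderiv ℝ f x (Pi.single j 1)

/-- Mixed partial derivative `D^s f`. -/
def mderiv {p : ℕ} (s : Fin p → ℕ) (f : (Fin p → ℝ) → ℝ) : (Fin p → ℝ) → ℝ :=
  (List.finRange p).foldr (fun j g => (pderiv1 j)^[s j] g) f

/-- Degree of an `ℕ`-valued multi-index. -/
def degN {p : ℕ} (s : Fin p → ℕ) : ℕ := ∑ j, s j

/-- Euclidean norm on `Fin p → ℝ`. -/
def eucNorm {p : ℕ} (x : Fin p → ℝ) : ℝ := Real.sqrt (∑ j, (x j) ^ 2)

/-- `⌈α - 1⌉` (as a natural number; it is `0` when `α ≤ 1`). -/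
def hOrder (α : ℝ) : ℕ := ⌈α - 1⌉₊

/-- The α-Hölder class with envelope `B` on `[0,1]^p`: `⌈α-1⌉`-times continuously
differentiable, and the sum of the sup-norm bound on all derivatives of order `≤ ⌈α-1⌉`
and the Hölder constant of the derivatives of order `⌈α-1⌉` is at most `B`. -/
def IsHolder (p : ℕ) (α B : ℝ) (f : (Fin p → ℝ) → ℝ) : Prop :=
  ContDiff ℝ (hOrder α : ℕ∞) f ∧
    ∃ B₁ B₂ : ℝ, 0 ≤ B₁ ∧ 0 ≤ B₂ ∧ B₁ + B₂ ≤ B ∧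
      (∀ s : Fin p → ℕ, degN s ≤ hOrder α → ∀ x ∈ cube p, |mderiv s f x| ≤ B₁) ∧
      (∀ s : Fin p → ℕ, degN s = hOrder α → ∀ x ∈ cube p, ∀ y ∈ cube p, x ≠ y →
        |mderiv s f x - mderiv s f y| ≤ B₂ * eucNorm (x - y) ^ (α - (degN s : ℝ)))

/-- The `N(0, σ²)` density `φ_σ`. -/
def gaussD (σ t : ℝ) : ℝ := (σ * Real.sqrt (2 * π))⁻¹ * Real.exp (-t ^ 2 / (2 * σ ^ 2))

/-! Write `y = K x`, `H = K h` and `t_k = K μ_k - k` (with `k` the zero-based block index).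
Then `(x - μ_k) / h = (y - k - t_k) / H`, so `K` disappears from the ranges of the parameters:
`F_K` is parametrized by a box of dimension `O(K^p)` with sides of bounded length, and such a box
has a sup-norm `η`-net of cardinality `(O(1) / η) ^ O(K^p)`.

It remains to see that the parametrization is Lipschitz with a constant that does not depend on
`K`. A member of `F_K` is at each point a weighted average of local polynomials. Only boundedly
many of the kernel values entering the weights are nonzero, each of them is Lipschitz in
`(H, t)`, and their sum is bounded below because the block containing `x` contributes at least
the minimum of `φ` on the ball of radius `1 / hmin < 1`. -/

section CoveringNumber

variable {X Y : Type*}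

lemma exists_finset_of_coveringNumber_le [PseudoEMetricSpace X] {ε : ℝ≥0} {s : Set X} {n : ℕ}
    (h : Metric.coveringNumber ε s ≤ n) :
    ∃ T : Finset X, (T : Set X) ⊆ s ∧ Metric.IsCover ε s T ∧ T.card ≤ n := by
  have htop : Metric.coveringNumber ε s ≠ ⊤ := ne_top_of_le_ne_top (ENat.natCast_ne_top n) h
  obtain ⟨N, hNs, hNfin, hcover, hcard⟩ := Metric.exists_set_encard_eq_coveringNumber htop
  refine ⟨hNfin.toFinset, by simpa using hNs, by simpa using hcover, ?_⟩
  rw [← hcard, hNfin.encard_eq_coe_toFinset_card] at h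
  exact_mod_cast h

lemma coveringNumber_le_card [PseudoEMetricSpace X] {ε : ℝ≥0} {s : Set X} {T : Finset X}
    (hTs : (T : Set X) ⊆ s) (hT : Metric.IsCover ε s T) :
    Metric.coveringNumber ε s ≤ T.card := by
  simpa only [Set.encard_coe_eq_coe_finsetCard] using hT.coveringNumber_le_encard hTs

lemma coveringNumber_prod_le [PseudoEMetricSpace X] [PseudoEMetricSpace Y] {ε : ℝ≥0}
    {s : Set X} {t : Set Y} {a b : ℕ} (hs : Metric.coveringNumber ε s ≤ a)
    (ht : Metric.coveringNumber ε t ≤ b) :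
    Metric.coveringNumber ε (s ×ˢ t) ≤ (a * b : ℕ) := by
  obtain ⟨S, hSs, hS, hSa⟩ := exists_finset_of_coveringNumber_le hs
  obtain ⟨T, hTt, hT, hTb⟩ := exists_finset_of_coveringNumber_le ht
  have hsub : ((S ×ˢ T : Finset (X × Y)) : Set (X × Y)) ⊆ s ×ˢ t := by
    simpa only [Finset.coe_product] using Set.prod_mono hSs hTt
  have hcover : Metric.IsCover ε (s ×ˢ t) (S ×ˢ T : Finset (X × Y)) := by
    rintro ⟨x, y⟩ ⟨hx, hy⟩
    obtain ⟨x', hx', hxx'⟩ := hS hx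
    obtain ⟨y', hy', hyy'⟩ := hT hy
    refine ⟨(x', y'), Finset.mem_coe.2 (Finset.mk_mem_product hx' hy'), ?_⟩
    change edist (x, y) (x', y') ≤ ε
    exact Prod.edist_eq (x, y) (x', y') ▸ max_le hxx' hyy'
  refine (coveringNumber_le_card hsub hcover).trans ?_
  rw [Finset.card_product]
  exact_mod_cast Nat.mul_le_mul hSa hTb

lemma coveringNumber_univ_pi_le {ι : Type*} [Fintype ι] {X : ι → Type*}
    [∀ i, PseudoEMetricSpace (X i)] {ε : ℝ≥0} {s : ∀ i, Set (X i)} {n : ι → ℕ}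
    (h : ∀ i, Metric.coveringNumber ε (s i) ≤ n i) :
    Metric.coveringNumber ε (Set.univ.pi s) ≤ (∏ i, n i : ℕ) := by
  choose T hTs hT hTn using fun i => exists_finset_of_coveringNumber_le (h i)
  have hsub : (Fintype.piFinset T : Set (∀ i, X i)) ⊆ Set.univ.pi s := by
    simpa only [Fintype.coe_piFinset] using Set.pi_mono fun i _ => hTs i
  have hcover : Metric.IsCover ε (Set.univ.pi s) (Fintype.piFinset T : Set (∀ i, X i)) := by
    intro x hx
    choose y hyT hxy using fun i => hT i (hx i trivial)
    exact ⟨y, Finset.mem_coe.2 (Fintype.mem_piFinset.2 hyT), edist_pi_le_iff.2 hxy⟩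
  refine (coveringNumber_le_card hsub hcover).trans ?_
  rw [Fintype.card_piFinset]
  exact_mod_cast Finset.prod_le_prod' fun i _ => hTn i

lemma coveringNumber_Icc_le {a b W : ℝ} (hW : b - a ≤ W) {η : ℝ≥0} (hη : 0 < η) :
    Metric.coveringNumber η (Set.Icc a b) ≤ (⌊W / η⌋₊ + 1 : ℕ) := by
  have hη' : (0 : ℝ) < η := hη
  let T : Finset ℝ :=
    ((Finset.range (⌊W / η⌋₊ + 1)).image fun i : ℕ => a + i * (η : ℝ)).filter (· ≤ b)
  have hsub : (T : Set ℝ) ⊆ Set.Icc a b := by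
    intro x hx
    obtain ⟨hx, hxb⟩ := Finset.mem_filter.1 hx
    obtain ⟨i, -, rfl⟩ := Finset.mem_image.1 hx
    exact ⟨le_add_of_nonneg_right (by positivity), hxb⟩
  have hcover : Metric.IsCover η (Set.Icc a b) (T : Set ℝ) := by
    intro x hx
    have hx0 : 0 ≤ (x - a) / η := div_nonneg (sub_nonneg.2 hx.1) hη'.le
    have hlow : ⌊(x - a) / η⌋₊ * (η : ℝ) ≤ x - a := (le_div_iff₀ hη').1 (Nat.floor_le hx0)
    have hupp : x - a < (⌊(x - a) / η⌋₊ + 1) * (η : ℝ) :=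
      (div_lt_iff₀ hη').1 (Nat.lt_floor_add_one _)
    have hidx : ⌊(x - a) / η⌋₊ ≤ ⌊W / η⌋₊ :=
      Nat.floor_mono (div_le_div_of_nonneg_right (by linarith [hx.2]) hη'.le)
    refine ⟨a + ⌊(x - a) / η⌋₊ * (η : ℝ), Finset.mem_coe.2 (Finset.mem_filter.2
      ⟨Finset.mem_image_of_mem _ (Finset.mem_range_succ_iff.2 hidx), by linarith [hx.2]⟩), ?_⟩
    change edist _ _ ≤ (η : ℝ≥0∞)
    rw [edist_le_coe, ← NNReal.coe_le_coe, coe_nndist, Real.dist_eq, abs_le]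
    constructor <;> linarith
  refine (coveringNumber_le_card hsub hcover).trans ?_
  exact_mod_cast (Finset.card_filter_le _ _).trans
    (Finset.card_image_le.trans (Finset.card_range _).le)

lemma exists_finset_uniform_net_image [PseudoMetricSpace X] {s : Set X} {A : Set Y}
    {F : X → Y → ℝ} {C : ℝ} (hC : 0 ≤ C)
    (hF : ∀ x ∈ s, ∀ x' ∈ s, ∀ y ∈ A, |F x y - F x' y| ≤ C * dist x x')
    {η : ℝ≥0} {n : ℕ} (hn : Metric.coveringNumber η s ≤ n) :
    ∃ G : Finset (Y → ℝ), G.card ≤ n ∧ ∀ x ∈ s, ∃ g ∈ G, ∀ y ∈ A, |F x y - g y| ≤ C * η := by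
  obtain ⟨T, hTs, hT, hTn⟩ := exists_finset_of_coveringNumber_le hn
  refine ⟨T.image F, Finset.card_image_le.trans hTn, fun x hx => ?_⟩
  obtain ⟨x', hx', hxx'⟩ := hT hx
  have hdist : dist x x' ≤ η := edist_le_coe.1 hxx'
  exact ⟨F x', Finset.mem_image_of_mem F hx', fun y hy =>
    (hF x hx x' (hTs hx') y hy).trans (mul_le_mul_of_nonneg_left hdist hC)⟩

end CoveringNumber

section NormedSpace

variable {E : Type*} [NormedAddCommGroup E] [NormedSpace ℝ E]

lemma norm_centerMass_le {ι : Type*} [Fintype ι] {w : ι → ℝ} {z : ι → E} {r : ℝ}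
    (hw : ∀ i, 0 ≤ w i) (hsum : 0 < ∑ i, w i) (hz : ∀ i, ‖z i‖ ≤ r) :
    ‖Finset.univ.centerMass w z‖ ≤ r := by
  simpa only [mem_closedBall_zero_iff] using (convex_closedBall (0 : E) r).centerMass_mem
    (fun i _ => hw i) hsum fun i _ => mem_closedBall_zero_iff.2 (hz i)

/- The deviations `z' i - centerMass w' z'` have `w'`-mean zero, so only the differences
`w i - w' i` of the weights enter the last sum. -/
lemma centerMass_sub_centerMass {ι : Type*} [Fintype ι] {w w' : ι → ℝ} (hw : ∑ i, w i ≠ 0)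
    (hw' : ∑ i, w' i ≠ 0) (z z' : ι → E) :
    Finset.univ.centerMass w z - Finset.univ.centerMass w' z' =
      Finset.univ.centerMass w (fun i => z i - z' i) +
        (∑ i, w i)⁻¹ • ∑ i, (w i - w' i) • (z' i - Finset.univ.centerMass w' z') := by
  set c := Finset.univ.centerMass w' z' with hc
  have hmean_zero : ∑ i, w' i • (z' i - c) = 0 := by
    simp only [smul_sub, Finset.sum_sub_distrib, ← Finset.sum_smul]
    rw [hc, Finset.centerMass, smul_inv_smul₀ hw', sub_self]
  have hdiff : ∑ i, (w i - w' i) • (z' i - c) = ∑ i, w i • z' i - (∑ i, w i) • c := by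
    simp only [sub_smul, Finset.sum_sub_distrib, hmean_zero, sub_zero]
    simp only [smul_sub, Finset.sum_sub_distrib, ← Finset.sum_smul]
  rw [hdiff, smul_sub, inv_smul_smul₀ hw]
  simp only [Finset.centerMass, smul_sub, Finset.sum_sub_distrib]
  abel

lemma norm_centerMass_sub_centerMass_le {ι : Type*} [Fintype ι] {w w' : ι → ℝ} {z z' : ι → E}
    {δ α A β : ℝ} (hδ : 0 < δ) (hw : ∀ i, 0 ≤ w i) (hw' : ∀ i, 0 ≤ w' i)
    (hsum : δ ≤ ∑ i, w i) (hsum' : δ ≤ ∑ i, w' i) (hz : ∀ i, ‖z i - z' i‖ ≤ α)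
    (hz' : ∀ i, ‖z' i‖ ≤ A) (hβ : ∑ i, |w i - w' i| ≤ β) :
    ‖Finset.univ.centerMass w z - Finset.univ.centerMass w' z'‖ ≤ α + 2 * A * β / δ := by
  have hpos : 0 < ∑ i, w i := hδ.trans_le hsum
  have hpos' : 0 < ∑ i, w' i := hδ.trans_le hsum'
  set c := Finset.univ.centerMass w' z'
  have hnorm_c : ‖c‖ ≤ A := norm_centerMass_le hw' hpos' hz'
  have hdev : ‖∑ i, (w i - w' i) • (z' i - c)‖ ≤ 2 * A * β := by
    have hA : 0 ≤ A := (norm_nonneg c).trans hnorm_c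
    calc ‖∑ i, (w i - w' i) • (z' i - c)‖ ≤ ∑ i, |w i - w' i| * (A + A) :=
          norm_sum_le_of_le _ fun i _ => by
            rw [norm_smul, Real.norm_eq_abs]
            exact mul_le_mul_of_nonneg_left
              ((norm_sub_le _ _).trans (add_le_add (hz' i) hnorm_c)) (abs_nonneg _)
      _ = 2 * A * ∑ i, |w i - w' i| := by rw [← Finset.sum_mul]; ring
      _ ≤ 2 * A * β := by gcongr
  calc ‖Finset.univ.centerMass w z - c‖
      ≤ ‖Finset.univ.centerMass w fun i => z i - z' i‖ +
        ‖(∑ i, w i)⁻¹ • ∑ i, (w i - w' i) • (z' i - c)‖ :=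
        centerMass_sub_centerMass hpos.ne' hpos'.ne' z z' ▸ norm_add_le _ _
    _ ≤ α + δ⁻¹ * (2 * A * β) := by
        rw [norm_smul, norm_inv, Real.norm_of_nonneg hpos.le]
        gcongr
        exact norm_centerMass_le hw hpos hz
    _ = α + 2 * A * β / δ := by ring

lemma norm_inv_smul_sub_inv_smul_le {a H H' : ℝ} (ha : 0 < a) (hH : a ≤ H) (hH' : a ≤ H')
    {v v' : E} (hv' : ‖H'⁻¹ • v'‖ ≤ 1) :
    ‖H⁻¹ • v - H'⁻¹ • v'‖ ≤ (‖v - v'‖ + |H - H'|) / a := by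
  have hHpos : 0 < H := ha.trans_le hH
  have hHpos' : 0 < H' := ha.trans_le hH'
  have hsplit : H⁻¹ • v - H'⁻¹ • v' = H⁻¹ • ((v - v') - (H - H') • H'⁻¹ • v') := by
    rw [sub_smul, smul_inv_smul₀ hHpos'.ne', smul_sub, smul_sub, smul_sub,
      inv_smul_smul₀ hHpos.ne']
    abel
  have hshift : ‖(H - H') • H'⁻¹ • v'‖ ≤ |H - H'| := by
    rw [norm_smul, Real.norm_eq_abs]
    exact mul_le_of_le_one_right (abs_nonneg _) hv'
  calc ‖H⁻¹ • v - H'⁻¹ • v'‖ = H⁻¹ * ‖(v - v') - (H - H') • H'⁻¹ • v'‖ := by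
        rw [hsplit, norm_smul, norm_inv, Real.norm_of_nonneg hHpos.le]
    _ ≤ a⁻¹ * (‖v - v'‖ + |H - H'|) := by
        gcongr
        exact (norm_sub_le _ _).trans (by gcongr)
    _ = (‖v - v'‖ + |H - H'|) / a := by ring

lemma abs_dilation_sub_dilation_le {φ : E → ℝ} {L : ℝ≥0} (hφL : LipschitzWith L φ)
    (hφ_supp : ∀ u, 1 < ‖u‖ → φ u = 0) {a H H' : ℝ} (ha : 0 < a) (hH : a ≤ H) (hH' : a ≤ H')
    (v v' : E) :
    |φ (H⁻¹ • v) - φ (H'⁻¹ • v')| ≤ L * ((‖v - v'‖ + |H - H'|) / a) := by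
  have hlip := hφL.norm_sub_le (H⁻¹ • v) (H'⁻¹ • v')
  rw [Real.norm_eq_abs] at hlip
  rcases le_or_gt ‖H'⁻¹ • v'‖ 1 with hv' | hv'
  · refine hlip.trans ?_
    gcongr
    exact norm_inv_smul_sub_inv_smul_le ha hH hH' hv'
  rcases le_or_gt ‖H⁻¹ • v‖ 1 with hv | hv
  · refine hlip.trans ?_
    gcongr
    rw [norm_sub_rev, norm_sub_rev v, abs_sub_comm]
    exact norm_inv_smul_sub_inv_smul_le ha hH' hH hv
  · rw [hφ_supp _ hv, hφ_supp _ hv', sub_zero, abs_zero]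
    positivity

end NormedSpace

section Lattice

variable {p K : ℕ}

lemma exists_fin_mem_Icc_add_one {y : ℝ} (hK : K ≠ 0) (hy0 : 0 ≤ y) (hyK : y ≤ K) :
    ∃ k : Fin K, y ∈ Set.Icc ((k : ℕ) : ℝ) ((k : ℕ) + 1) := by
  rcases hyK.lt_or_eq with hlt | rfl
  · exact ⟨⟨⌊y⌋₊, (Nat.floor_lt hy0).2 hlt⟩, Nat.floor_le hy0, (Nat.lt_floor_add_one y).le⟩
  · refine ⟨⟨K - 1, Nat.sub_one_lt hK⟩, ?_⟩
    simp [Nat.cast_pred (Nat.pos_of_ne_zero hK)]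

lemma card_filter_abs_sub_le (y : ℝ) {R : ℝ} (hR : 0 ≤ R) :
    ((Finset.univ.filter fun k : Fin K => |y - (k : ℕ)| ≤ R).card : ℝ) ≤ 2 * R + 1 := by
  have hinj : (Finset.univ.filter fun k : Fin K => |y - (k : ℕ)| ≤ R).card ≤
      (Finset.Icc ⌈y - R⌉ ⌊y + R⌋).card := by
    refine Finset.card_le_card_of_injOn (fun k => ((k : ℕ) : ℤ)) (fun k hk => ?_) ?_
    · have hk := abs_le.1 (Finset.mem_filter.1 hk).2
      simp only [Finset.coe_Icc, Set.mem_Icc, Int.ceil_le, Int.le_floor, Int.cast_natCast]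
      constructor <;> linarith [hk.1, hk.2]
    · exact fun k _ l _ hkl => Fin.ext (Nat.cast_injective hkl)
  have hlen : ((⌊y + R⌋ + 1 - ⌈y - R⌉ : ℤ) : ℝ) ≤ 2 * R + 1 := by
    push_cast
    linarith [Int.le_ceil (y - R), Int.floor_le (y + R)]
  calc ((Finset.univ.filter fun k : Fin K => |y - (k : ℕ)| ≤ R).card : ℝ)
      ≤ ((Finset.Icc ⌈y - R⌉ ⌊y + R⌋).card : ℝ) := mod_cast hinj
    _ = max ((⌊y + R⌋ + 1 - ⌈y - R⌉ : ℤ) : ℝ) 0 := by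
        rw [Int.card_Icc, ← Int.cast_natCast, Int.toNat_eq_max, Int.cast_max, Int.cast_zero]
    _ ≤ 2 * R + 1 := max_le hlen (by positivity)

lemma card_filter_forall_abs_sub_le (y : Fin p → ℝ) {R : ℝ} (hR : 0 ≤ R) :
    ((Finset.univ.filter fun k : Fin p → Fin K => ∀ j, |y j - (k j : ℕ)| ≤ R).card : ℝ) ≤
      (2 * R + 1) ^ p := by
  have hpi : (Finset.univ.filter fun k : Fin p → Fin K => ∀ j, |y j - (k j : ℕ)| ≤ R) =
      Fintype.piFinset fun j => Finset.univ.filter fun k : Fin K => |y j - (k : ℕ)| ≤ R := by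
    ext k
    simp [Fintype.mem_piFinset]
  rw [hpi, Fintype.card_piFinset, Nat.cast_prod]
  refine (Finset.prod_le_prod (fun _ _ => Nat.cast_nonneg _)
    fun j _ => card_filter_abs_sub_le (y j) hR).trans_eq ?_
  rw [Finset.prod_const, Finset.card_univ, Fintype.card_fin]

end Lattice

section Parametrization

variable {p m K : ℕ}

/-- Rescaled parameters of a kernel mixture of polynomials: the bandwidth `H = K h`, the positions
`t_k ∈ [0,1]^p` of the centers inside their blocks, and the coefficients `ξ`. The product metric is
the sup metric. -/
abbrev Param (p m K : ℕ) : Type :=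
  ℝ × ((Fin p → Fin K) → Fin p → ℝ) × ((Fin p → Fin K) → (Fin p → Fin (m + 1)) → ℝ)

/-- The box of admissible parameters. It also constrains the coefficients `ξ_{ks}` with `|s| > m`,
which do not enter the mixture. -/
def paramBox (p m K : ℕ) (hmin hmax B : ℝ) : Set (Param p m K) :=
  Set.Icc hmin hmax ×ˢ
    (Set.univ.pi fun _ => Set.univ.pi fun _ => Set.Icc 0 1) ×ˢ
      (Set.univ.pi fun _ => Set.univ.pi fun _ => Set.Icc (-B) B)

/-- The kernel mixture of polynomials with given rescaled parameters. -/
def paramFun (φ : (Fin p → ℝ) → ℝ) (θ : Param p m K) : (Fin p → ℝ) → ℝ :=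
  kmpFun φ K m (θ.1 / K) (fun k j => ((k j : ℕ) + θ.2.1 k j) / K) θ.2.2

/-- The vector `K (x - μ_k)` for the center `μ_k` at position `t_k` of the block `k`. -/
def scaledOffset (t : (Fin p → Fin K) → Fin p → ℝ) (x : Fin p → ℝ) (k : Fin p → Fin K) :
    Fin p → ℝ :=
  fun j => K * x j - ((k j : ℕ) + t k j)

/-- The unnormalized weight `φ_h(x - μ_k)` in rescaled parameters. -/
def kernelVal (φ : (Fin p → ℝ) → ℝ) (θ : Param p m K) (x : Fin p → ℝ) (k : Fin p → Fin K) : ℝ :=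
  φ (θ.1⁻¹ • scaledOffset θ.2.1 x k)

/-- The local polynomial attached to the block `k`. -/
def localPoly (c : (Fin p → Fin (m + 1)) → ℝ) (k : Fin p → Fin K) (x : Fin p → ℝ) : ℝ :=
  ∑ s ∈ mIdx p m, c s * mono K m k s x

lemma paramFun_eq_centerMass (hK : K ≠ 0) (φ : (Fin p → ℝ) → ℝ) (θ : Param p m K)
    (x : Fin p → ℝ) :
    paramFun φ θ x =
      Finset.univ.centerMass (kernelVal φ θ x) fun k => localPoly (θ.2.2 k) k x := by
  have hK' : (K : ℝ) ≠ 0 := Nat.cast_ne_zero.2 hK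
  have hval (k : Fin p → Fin K) :
      φ (fun j => (x j - ((k j : ℕ) + θ.2.1 k j) / K) / (θ.1 / K)) = kernelVal φ θ x k := by
    refine congrArg φ (funext fun j => ?_)
    simp only [Pi.smul_apply, smul_eq_mul, scaledOffset]
    rw [← mul_div_mul_left _ (θ.1 / K) hK', mul_sub, mul_div_cancel₀ _ hK', mul_div_cancel₀ _ hK']
    ring
  simp only [paramFun, kmpFun, weight, hval, Finset.centerMass, localPoly, smul_eq_mul,
    Finset.mul_sum]
  refine Finset.sum_congr rfl fun k _ => Finset.sum_congr rfl fun s _ => ?_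
  ring

lemma mem_blockCl_iff (hK : K ≠ 0) {k : Fin p → Fin K} {x : Fin p → ℝ} :
    x ∈ blockCl K k ↔ ∀ j, K * x j - (k j : ℕ) ∈ Set.Icc (0 : ℝ) 1 := by
  have hKpos : (0 : ℝ) < K := Nat.cast_pos.2 (Nat.pos_of_ne_zero hK)
  simp only [blockCl, Set.mem_ofPred_eq, Set.mem_Icc, div_le_iff₀' hKpos, le_div_iff₀' hKpos,
    sub_nonneg, sub_le_iff_le_add']

lemma exists_mem_paramBox_paramFun_eq (hK : K ≠ 0) {hmin hmax B h : ℝ}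
    (hh : K * h ∈ Set.Icc hmin hmax) {μ : (Fin p → Fin K) → Fin p → ℝ}
    (hμ : ∀ k, μ k ∈ blockCl K k) (hB : 0 ≤ B)
    {ξ : (Fin p → Fin K) → (Fin p → Fin (m + 1)) → ℝ} (hξ : ∀ k, ∀ s ∈ mIdx p m, |ξ k s| ≤ B)
    (φ : (Fin p → ℝ) → ℝ) :
    ∃ θ ∈ paramBox p m K hmin hmax B, paramFun φ θ = kmpFun φ K m h μ ξ := by
  have hK' : (K : ℝ) ≠ 0 := Nat.cast_ne_zero.2 hK
  refine ⟨(K * h, fun k j => K * μ k j - (k j : ℕ), fun k s => if s ∈ mIdx p m then ξ k s else 0),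
    ⟨hh, fun k _ j _ => (mem_blockCl_iff hK).1 (hμ k) j, fun k _ s _ => ?_⟩, ?_⟩
  · dsimp only
    split_ifs with hs
    · exact abs_le.1 (hξ k s hs)
    · exact ⟨neg_nonpos.2 hB, hB⟩
  · funext x
    simp only [paramFun, kmpFun, add_sub_cancel, mul_div_cancel_left₀ _ hK']
    refine Finset.sum_congr rfl fun k _ => Finset.sum_congr rfl fun s hs => ?_
    rw [if_pos hs]

lemma coveringNumber_paramBox_le (hK : K ≠ 0) {hmin hmax B : ℝ} (hB : 0 ≤ B)
    (hh : hmin ≤ hmax) {η : ℝ≥0} (hη : 0 < η) :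
    Metric.coveringNumber η (paramBox p m K hmin hmax B) ≤
      ((⌊(hmax - hmin + 1 + 2 * B) / η⌋₊ + 1) ^ ((1 + p + (m + 1) ^ p) * K ^ p) : ℕ) := by
  set W := hmax - hmin + 1 + 2 * B
  have hH : Metric.coveringNumber η (Set.Icc hmin hmax) ≤ (⌊W / η⌋₊ + 1 : ℕ) :=
    coveringNumber_Icc_le (by linarith) hη
  have ht : Metric.coveringNumber η (Set.Icc (0 : ℝ) 1) ≤ (⌊W / η⌋₊ + 1 : ℕ) :=
    coveringNumber_Icc_le (by linarith) hη
  have hξ : Metric.coveringNumber η (Set.Icc (-B) B) ≤ (⌊W / η⌋₊ + 1 : ℕ) :=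
    coveringNumber_Icc_le (by linarith) hη
  have hexp : 1 + p * K ^ p + (m + 1) ^ p * K ^ p ≤ (1 + p + (m + 1) ^ p) * K ^ p := by
    rw [add_mul, add_mul, one_mul]
    gcongr
    exact Nat.one_le_pow _ _ (Nat.pos_of_ne_zero hK)
  refine (coveringNumber_prod_le hH <| coveringNumber_prod_le
    (coveringNumber_univ_pi_le fun _ => coveringNumber_univ_pi_le fun _ => ht)
    (coveringNumber_univ_pi_le fun _ => coveringNumber_univ_pi_le fun _ => hξ)).trans ?_
  refine Nat.cast_le.2 (le_trans (le_of_eq ?_) (Nat.pow_le_pow_right (Nat.succ_pos _) hexp))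
  simp [pow_add, pow_mul, mul_assoc]

lemma abs_mono_le_one (k : Fin p → Fin K) (s : Fin p → Fin (m + 1)) {x : Fin p → ℝ}
    (hx : x ∈ cube p) : |mono K m k s x| ≤ 1 := by
  rw [mono, Finset.abs_prod]
  refine Finset.prod_le_one (fun _ _ => abs_nonneg _) fun j _ => ?_
  rw [abs_pow]
  refine pow_le_one₀ (abs_nonneg _) ?_
  have hlt : ((k j : ℕ) : ℝ) + 1 ≤ K := mod_cast (k j).2
  have hcenter_nonneg : 0 ≤ center K k j := by unfold center; positivity
  have hcenter_le : center K k j ≤ 1 := div_le_one_of_le₀ (by linarith) (by positivity)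
  exact abs_sub_le_of_nonneg_of_le (hx j).1 (hx j).2 hcenter_nonneg hcenter_le

lemma abs_localPoly_le {c : (Fin p → Fin (m + 1)) → ℝ} {b : ℝ} (hb : 0 ≤ b)
    (hc : ∀ s, |c s| ≤ b) (k : Fin p → Fin K) {x : Fin p → ℝ} (hx : x ∈ cube p) :
    |localPoly c k x| ≤ (m + 1) ^ p * b := by
  have hcard : (mIdx p m).card ≤ (m + 1) ^ p := (Finset.card_filter_le _ _).trans_eq (by simp)
  calc |localPoly c k x| ≤ ∑ s ∈ mIdx p m, |c s * mono K m k s x| := Finset.abs_sum_le_sum_abs _ _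
    _ ≤ (mIdx p m).card • b := Finset.sum_le_card_nsmul _ _ _ fun s _ => by
        rw [abs_mul]
        exact (mul_le_of_le_one_right (abs_nonneg _) (abs_mono_le_one k s hx)).trans (hc s)
    _ ≤ (m + 1) ^ p * b := by
        rw [nsmul_eq_mul]
        gcongr
        exact_mod_cast hcard

lemma localPoly_sub (c c' : (Fin p → Fin (m + 1)) → ℝ) (k : Fin p → Fin K) (x : Fin p → ℝ) :
    localPoly c k x - localPoly c' k x = localPoly (c - c') k x := by
  simp only [localPoly, Pi.sub_apply, sub_mul, Finset.sum_sub_distrib]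

end Parametrization

section Stability

variable {p m K : ℕ} {φ : (Fin p → ℝ) → ℝ} {hmin hmax B : ℝ}

lemma le_sum_kernelVal (hK : K ≠ 0) (hφ_nonneg : ∀ u, 0 ≤ φ u) (hmin_pos : 0 < hmin) {δ : ℝ}
    (hδ : ∀ u ∈ Metric.closedBall 0 hmin⁻¹, δ ≤ φ u) {θ : Param p m K}
    (hθ : θ ∈ paramBox p m K hmin hmax B) {x : Fin p → ℝ} (hx : x ∈ cube p) :
    δ ≤ ∑ k, kernelVal φ θ x k := by
  choose k hk using fun j => exists_fin_mem_Icc_add_one hK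
    (mul_nonneg K.cast_nonneg (hx j).1) (mul_le_of_le_one_right K.cast_nonneg (hx j).2)
  have hoffset : ‖scaledOffset θ.2.1 x k‖ ≤ 1 := by
    refine (pi_norm_le_iff_of_nonneg zero_le_one).2 fun j => abs_le.2 ?_
    simp only [scaledOffset]
    have ht : θ.2.1 k j ∈ Set.Icc 0 1 := hθ.2.1 k trivial j trivial
    constructor <;> linarith [(hk j).1, (hk j).2, ht.1, ht.2]
  have hk_le : δ ≤ kernelVal φ θ x k := by
    refine hδ _ (mem_closedBall_zero_iff.2 ?_)
    have hθ_pos : 0 < θ.1 := hmin_pos.trans_le hθ.1.1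
    calc ‖θ.1⁻¹ • scaledOffset θ.2.1 x k‖ = θ.1⁻¹ * ‖scaledOffset θ.2.1 x k‖ := by
          rw [norm_smul, norm_inv, Real.norm_of_nonneg hθ_pos.le]
      _ ≤ hmin⁻¹ * 1 := by
          gcongr
          exact hθ.1.1
      _ = hmin⁻¹ := mul_one _
  exact hk_le.trans (Finset.single_le_sum (f := kernelVal φ θ x) (fun l _ => hφ_nonneg _)
    (Finset.mem_univ k))

lemma kernelVal_eq_zero (hφ_supp : ∀ u, 1 < ‖u‖ → φ u = 0) (hmin_pos : 0 < hmin)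
    {θ : Param p m K} (hθ : θ ∈ paramBox p m K hmin hmax B) {x : Fin p → ℝ} {k : Fin p → Fin K}
    (hk : ¬ ∀ j, |K * x j - (k j : ℕ)| ≤ hmax + 1) : kernelVal φ θ x k = 0 := by
  obtain ⟨j, hj⟩ := not_forall.1 hk
  have hθ_pos : 0 < θ.1 := hmin_pos.trans_le hθ.1.1
  have ht : θ.2.1 k j ∈ Set.Icc 0 1 := hθ.2.1 k trivial j trivial
  refine hφ_supp _ (lt_of_lt_of_le ?_ (norm_le_pi_norm _ j))
  rw [Pi.smul_apply, norm_smul, norm_inv, Real.norm_of_nonneg hθ_pos.le, Real.norm_eq_abs,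
    ← div_eq_inv_mul, one_lt_div hθ_pos]
  have htri : |K * x j - (k j : ℕ)| ≤ |scaledOffset θ.2.1 x k j| + |θ.2.1 k j| := by
    simpa [scaledOffset, sub_add_eq_sub_sub] using
      abs_add_le (scaledOffset θ.2.1 x k j) (θ.2.1 k j)
  rw [abs_of_nonneg ht.1] at htri
  linarith [hθ.1.2, ht.2, not_le.1 hj]

lemma norm_scaledOffset_sub_le (t t' : (Fin p → Fin K) → Fin p → ℝ) (x : Fin p → ℝ)
    (k : Fin p → Fin K) : ‖scaledOffset t x k - scaledOffset t' x k‖ ≤ dist t t' := by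
  have hsub : scaledOffset t x k - scaledOffset t' x k = t' k - t k := by
    funext j
    simp only [scaledOffset, Pi.sub_apply]
    ring
  rw [hsub, ← dist_eq_norm, dist_comm]
  exact dist_le_pi_dist t t' k

lemma abs_kernelVal_sub_le {L : ℝ≥0} (hφL : LipschitzWith L φ)
    (hφ_supp : ∀ u, 1 < ‖u‖ → φ u = 0) (hmin_pos : 0 < hmin) {θ θ' : Param p m K}
    (hθ : θ ∈ paramBox p m K hmin hmax B) (hθ' : θ' ∈ paramBox p m K hmin hmax B)
    (x : Fin p → ℝ) (k : Fin p → Fin K) :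
    |kernelVal φ θ x k - kernelVal φ θ' x k| ≤ 2 * L / hmin * dist θ θ' := by
  have hH : |θ.1 - θ'.1| ≤ dist θ θ' := le_max_left _ _
  have ht : ‖scaledOffset θ.2.1 x k - scaledOffset θ'.2.1 x k‖ ≤ dist θ θ' :=
    (norm_scaledOffset_sub_le _ _ x k).trans ((le_max_left _ _).trans (le_max_right _ _))
  calc |kernelVal φ θ x k - kernelVal φ θ' x k|
      ≤ L * ((‖scaledOffset θ.2.1 x k - scaledOffset θ'.2.1 x k‖ + |θ.1 - θ'.1|) / hmin) :=
        abs_dilation_sub_dilation_le hφL hφ_supp hmin_pos hθ.1.1 hθ'.1.1 _ _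
    _ ≤ L * ((dist θ θ' + dist θ θ') / hmin) := by gcongr
    _ = 2 * L / hmin * dist θ θ' := by ring

lemma sum_abs_kernelVal_sub_le {L : ℝ≥0} (hφL : LipschitzWith L φ)
    (hφ_supp : ∀ u, 1 < ‖u‖ → φ u = 0) (hmin_pos : 0 < hmin) {θ θ' : Param p m K}
    (hθ : θ ∈ paramBox p m K hmin hmax B) (hθ' : θ' ∈ paramBox p m K hmin hmax B)
    (x : Fin p → ℝ) :
    ∑ k, |kernelVal φ θ x k - kernelVal φ θ' x k| ≤
      (2 * (hmax + 1) + 1) ^ p * (2 * L / hmin * dist θ θ') := by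
  have hhmax : 0 ≤ hmax := hmin_pos.le.trans (hθ.1.1.trans hθ.1.2)
  let near := Finset.univ.filter fun k : Fin p → Fin K => ∀ j, |K * x j - (k j : ℕ)| ≤ hmax + 1
  have hfar : ∀ k ∈ Finset.univ, k ∉ near → |kernelVal φ θ x k - kernelVal φ θ' x k| = 0 := by
    intro k _ hk
    have hk : ¬ ∀ j, |K * x j - (k j : ℕ)| ≤ hmax + 1 := by simpa [near] using hk
    rw [kernelVal_eq_zero hφ_supp hmin_pos hθ hk, kernelVal_eq_zero hφ_supp hmin_pos hθ' hk,
      sub_zero, abs_zero]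
  calc ∑ k, |kernelVal φ θ x k - kernelVal φ θ' x k|
      = ∑ k ∈ near, |kernelVal φ θ x k - kernelVal φ θ' x k| :=
        (Finset.sum_subset near.subset_univ hfar).symm
    _ ≤ near.card • (2 * L / hmin * dist θ θ') := Finset.sum_le_card_nsmul _ _ _ fun k _ =>
        abs_kernelVal_sub_le hφL hφ_supp hmin_pos hθ hθ' x k
    _ ≤ (2 * (hmax + 1) + 1) ^ p * (2 * L / hmin * dist θ θ') := by
        rw [nsmul_eq_mul]
        gcongr
        exact card_filter_forall_abs_sub_le (fun j => K * x j) (by positivity)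

lemma abs_paramFun_sub_le (hK : K ≠ 0) (hφ_nonneg : ∀ u, 0 ≤ φ u)
    (hφ_supp : ∀ u, 1 < ‖u‖ → φ u = 0) {L : ℝ≥0} (hφL : LipschitzWith L φ)
    (hmin_pos : 0 < hmin) {δ : ℝ} (hδ_pos : 0 < δ)
    (hδ : ∀ u ∈ Metric.closedBall 0 hmin⁻¹, δ ≤ φ u) {θ θ' : Param p m K}
    (hθ : θ ∈ paramBox p m K hmin hmax B) (hθ' : θ' ∈ paramBox p m K hmin hmax B)
    {x : Fin p → ℝ} (hx : x ∈ cube p) :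
    |paramFun φ θ x - paramFun φ θ' x| ≤ ((m + 1) ^ p + 2 * ((m + 1) ^ p * B) *
      ((2 * (hmax + 1) + 1) ^ p * (2 * L / hmin)) / δ) * dist θ θ' := by
  have hdist (k) (s) : |(θ.2.2 k - θ'.2.2 k) s| ≤ dist θ θ' :=
    calc |θ.2.2 k s - θ'.2.2 k s| ≤ dist (θ.2.2 k) (θ'.2.2 k) :=
          dist_le_pi_dist (θ.2.2 k) (θ'.2.2 k) s
      _ ≤ dist θ.2.2 θ'.2.2 := dist_le_pi_dist _ _ k
      _ ≤ dist θ θ' := (le_max_right _ _).trans (le_max_right _ _)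
  have hcoef (k) (s) : |θ'.2.2 k s| ≤ B := abs_le.2 (hθ'.2.2 k trivial s trivial)
  have hpoly (k) : ‖localPoly (θ.2.2 k) k x - localPoly (θ'.2.2 k) k x‖ ≤
      (m + 1) ^ p * dist θ θ' := by
    rw [localPoly_sub]
    exact abs_localPoly_le dist_nonneg (hdist k) k hx
  have hpoly' (k) : ‖localPoly (θ'.2.2 k) k x‖ ≤ (m + 1) ^ p * B :=
    abs_localPoly_le ((abs_nonneg _).trans (hcoef k 0)) (hcoef k) k hx
  rw [paramFun_eq_centerMass hK, paramFun_eq_centerMass hK]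
  refine (norm_centerMass_sub_centerMass_le hδ_pos (fun _ => hφ_nonneg _) (fun _ => hφ_nonneg _)
    (le_sum_kernelVal hK hφ_nonneg hmin_pos hδ hθ hx)
    (le_sum_kernelVal hK hφ_nonneg hmin_pos hδ hθ' hx) hpoly hpoly'
    (sum_abs_kernelVal_sub_le hφL hφ_supp hmin_pos hθ hθ' x)).trans_eq ?_
  ring

lemma exists_forall_abs_paramFun_sub_le (hB : 0 ≤ B) (hh1 : 1 < hmin) (hh2 : hmin ≤ hmax)
    (hφ_nonneg : ∀ u, 0 ≤ φ u) (hφ_supp : ∀ u, 1 < ‖u‖ → φ u = 0)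
    (hφ_pos : ∀ u, ‖u‖ < 1 → 0 < φ u) {L : ℝ≥0} (hφL : LipschitzWith L φ) (m : ℕ) :
    ∃ C : ℝ, 0 < C ∧ ∀ K : ℕ, K ≠ 0 → ∀ θ ∈ paramBox p m K hmin hmax B,
      ∀ θ' ∈ paramBox p m K hmin hmax B, ∀ x ∈ cube p,
        |paramFun φ θ x - paramFun φ θ' x| ≤ C * dist θ θ' := by
  have hmin_pos : 0 < hmin := zero_lt_one.trans hh1
  have hmax_pos : 0 < hmax := hmin_pos.trans_le hh2
  obtain ⟨δ, hδ_pos, hδ⟩ : ∃ δ, 0 < δ ∧ ∀ u ∈ Metric.closedBall 0 hmin⁻¹, δ ≤ φ u :=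
    (isCompact_closedBall 0 hmin⁻¹).exists_forall_le' hφL.continuous.continuousOn fun u hu =>
      hφ_pos u ((mem_closedBall_zero_iff.1 hu).trans_lt (inv_lt_one_of_one_lt₀ hh1))
  exact ⟨_, by positivity, fun K hK θ hθ θ' hθ' x hx =>
    abs_paramFun_sub_le hK hφ_nonneg hφ_supp hφL hmin_pos hδ_pos hδ hθ hθ' hx⟩

end Stability

lemma floor_div_add_one_pow_le_exp {a ε : ℝ} (ha : 0 ≤ a) (hε : 0 < ε) (hεa : ε < 1 / (a + 1))
    (n : ℕ) : ((⌊a / ε⌋₊ + 1 : ℕ) : ℝ) ^ n ≤ exp (2 * n * log (1 / ε)) := by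
  have hinv : a + 1 ≤ 1 / ε := ((lt_one_div hε (by positivity)).1 hεa).le
  have hbase : ((⌊a / ε⌋₊ + 1 : ℕ) : ℝ) ≤ (1 / ε) ^ 2 :=
    calc ((⌊a / ε⌋₊ + 1 : ℕ) : ℝ) ≤ a * (1 / ε) + 1 := by
          push_cast
          rw [mul_one_div]
          gcongr
          exact Nat.floor_le (by positivity)
      _ ≤ (1 / ε) ^ 2 := by nlinarith
  calc ((⌊a / ε⌋₊ + 1 : ℕ) : ℝ) ^ n ≤ ((1 / ε) ^ 2) ^ n := by gcongr
    _ = exp (log (1 / ε)) ^ (2 * n) := by rw [exp_log (by positivity), pow_mul]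
    _ = exp (2 * n * log (1 / ε)) := by
        rw [← exp_nat_mul]
        push_cast
        rfl

theorem statement6_general {p m : ℕ} {B : ℝ} (hB : 0 ≤ B) {hmin hmax : ℝ} (hh1 : 1 < hmin)
    (hh2 : hmin ≤ hmax) {φ : (Fin p → ℝ) → ℝ} (hφ_nonneg : ∀ u, 0 ≤ φ u)
    (hφ_supp : ∀ u, 1 < ‖u‖ → φ u = 0) (hφ_pos : ∀ u, ‖u‖ < 1 → 0 < φ u)
    {L : ℝ≥0} (hφL : LipschitzWith L φ) :
    ∃ c₂ : ℝ, 0 < c₂ ∧ ∃ ε₀ : ℝ, 0 < ε₀ ∧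
      ∀ K : ℕ, 1 ≤ K → ∀ ε : ℝ, 0 < ε → ε < ε₀ →
        ∃ G : Finset ((Fin p → ℝ) → ℝ),
          (G.card : ℝ) ≤ Real.exp (c₂ * (K : ℝ) ^ p * Real.log (1 / ε)) ∧
          ∀ h : ℝ, (K : ℝ) * h ∈ Set.Icc hmin hmax →
          ∀ μ : (Fin p → Fin K) → Fin p → ℝ, (∀ k, μ k ∈ blockCl K k) →
          ∀ ξ : (Fin p → Fin K) → (Fin p → Fin (m + 1)) → ℝ,
            (∀ k, ∀ s ∈ mIdx p m, |ξ k s| ≤ B) →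
            ∃ g ∈ G, ∀ x ∈ cube p, |kmpFun φ K m h μ ξ x - g x| ≤ ε := by
  obtain ⟨C, hC, hlip⟩ :=
    exists_forall_abs_paramFun_sub_le hB hh1 hh2 hφ_nonneg hφ_supp hφ_pos hφL m
  set W : ℝ := hmax - hmin + 1 + 2 * B
  set D : ℕ := 1 + p + (m + 1) ^ p
  have hWC : 0 < W * C := mul_pos (by linarith) hC
  refine ⟨2 * D, by positivity, 1 / (W * C + 1), one_div_pos.2 (by linarith),
    fun K hK ε hε hεlt => ?_⟩
  have hK : K ≠ 0 := Nat.one_le_iff_ne_zero.1 hK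
  obtain ⟨η, hη⟩ : ∃ η : ℝ≥0, (η : ℝ) = ε / C := ⟨⟨ε / C, by positivity⟩, rfl⟩
  have hη_pos : 0 < η := NNReal.coe_pos.1 (hη ▸ div_pos hε hC)
  obtain ⟨G, hG_card, hG⟩ := exists_finset_uniform_net_image hC.le (hlip K hK)
    (coveringNumber_paramBox_le hK hB hh2 hη_pos)
  refine ⟨G, ?_, fun h hh μ hμ ξ hξ => ?_⟩
  · calc (G.card : ℝ) ≤ ((⌊W * C / ε⌋₊ + 1 : ℕ) : ℝ) ^ (D * K ^ p) := by
          rw [← div_div_eq_mul_div, ← hη]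
          exact_mod_cast hG_card
      _ ≤ exp (2 * (D * K ^ p : ℕ) * log (1 / ε)) :=
          floor_div_add_one_pow_le_exp hWC.le hε hεlt _
      _ = exp (2 * D * (K : ℝ) ^ p * log (1 / ε)) := by
          push_cast
          ring_nf
  · obtain ⟨θ, hθ, hfθ⟩ := exists_mem_paramBox_paramFun_eq hK hh hμ hB hξ φ
    rw [← hfθ, ← mul_div_cancel₀ ε hC.ne', ← hη]
    exact hG θ hθ

/-- Metric entropy bound: the class `F_K` of kernel mixtures of polynomials
(with a fixed Lipschitz boxed kernel) admits, for every small `ε`, a sup-norm `ε`-net of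
cardinality at most `exp(c₂ K^p log(1/ε))`. -/
theorem statement6 {p m : ℕ} (hp : 0 < p) (hm : 0 < m) (B : ℝ) (hB : 0 < B)
    (hmin hmax : ℝ) (hh1 : 1 < hmin) (hh2 : hmin < hmax)
    (φ : (Fin p → ℝ) → ℝ) (hφ : IsBoxedKernel φ)
    (hφpos : ∀ u : Fin p → ℝ, ‖u‖ < 1 → 0 < φ u)
    (L : NNReal) (hφL : LipschitzWith L φ) :
    ∃ c₂ : ℝ, 0 < c₂ ∧ ∃ ε₀ : ℝ, 0 < ε₀ ∧
      ∀ K : ℕ, 1 ≤ K → ∀ ε : ℝ, 0 < ε → ε < ε₀ →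
        ∃ G : Finset ((Fin p → ℝ) → ℝ),
          (G.card : ℝ) ≤ Real.exp (c₂ * (K : ℝ) ^ p * Real.log (1 / ε)) ∧
          ∀ h : ℝ, (K : ℝ) * h ∈ Set.Icc hmin hmax →
          ∀ μ : (Fin p → Fin K) → Fin p → ℝ, (∀ k, μ k ∈ block K k) →
          ∀ ξ : (Fin p → Fin K) → (Fin p → Fin (m + 1)) → ℝ,
            (∀ k, ∀ s ∈ mIdx p m, |ξ k s| ≤ B) →
            ∃ g ∈ G, ∀ x ∈ cube p, |kmpFun φ K m h μ ξ x - g x| ≤ ε := by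
  obtain ⟨c₂, hc₂, ε₀, hε₀, hnet⟩ := statement6_general (m := m) hB.le hh1 hh2.le
    (fun u => (hφ.2.1 u).1) hφ.2.2.1 hφpos hφL
  refine ⟨c₂, hc₂, ε₀, hε₀, fun K hK ε hε hεlt => ?_⟩
  obtain ⟨G, hcard, hG⟩ := hnet K hK ε hε hεlt
  exact ⟨G, hcard, fun h hh μ hμ => hG h hh μ fun k j => ⟨(hμ k j).1.le, (hμ k j).2⟩⟩

end KMP
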